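/- Monotonicity of the minimum gain function: defining γ*_T(x) = inf{γ ≥ 0 : Π_T^γ(x) ≠ ∅} (with inf ∅ = +∞), for every x ∈ ℝⁿ with Π_T^γ(x) nonempty for some γ ≥ 0, one has γ*_{T+1}(x) ≤ max{γ_f, γ*_T(x)}. -/

import Mathlib

open Matrix

noncomputable section

/-- Index type for stacked state / disturbance trajectories over horizon `T`:
block index in `Fin (T+1)`, coordinate in `Fin n`. -/
abbrev SIdx (n T : ℕ) := Fin (T + 1) × Fin n

/-- Index type for stacked input trajectories over horizon `T`. -/
abbrev UIdx (m T : ℕ) := Fin T × Fin m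

/-- The block-downshift operator `𝐙`. -/
def Zshift (n T : ℕ) : Matrix (SIdx n T) (SIdx n T) ℝ :=
  Matrix.of fun p q => if (p.1 : ℕ) = (q.1 : ℕ) + 1 ∧ p.2 = q.2 then (1 : ℝ) else 0

/-- `𝐀 = I_{T+1} ⊗ A`. -/
def bigA (n T : ℕ) (A : Matrix (Fin n) (Fin n) ℝ) : Matrix (SIdx n T) (SIdx n T) ℝ :=
  Matrix.of fun p q => if p.1 = q.1 then A p.2 q.2 else 0

/-- `𝐁 = col(I_T ⊗ B, 0)`. -/
def bigB (n m T : ℕ) (B : Matrix (Fin n) (Fin m) ℝ) : Matrix (SIdx n T) (UIdx m T) ℝ :=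
  Matrix.of fun p q => if (p.1 : ℕ) = (q.1 : ℕ) then B p.2 q.2 else 0

/-- `𝐐 = blkdiag(I_T ⊗ Q, 0)`. -/
def bigQ (n T : ℕ) (Q : Matrix (Fin n) (Fin n) ℝ) : Matrix (SIdx n T) (SIdx n T) ℝ :=
  Matrix.of fun p q => if p.1 = q.1 ∧ (p.1 : ℕ) < T then Q p.2 q.2 else 0

/-- `𝐑 = I_T ⊗ R`. -/
def bigR (m T : ℕ) (R : Matrix (Fin m) (Fin m) ℝ) : Matrix (UIdx m T) (UIdx m T) ℝ :=
  Matrix.of fun p q => if p.1 = q.1 then R p.2 q.2 else 0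

/-- `𝐅 = (I − 𝐙𝐀)⁻¹𝐙𝐁`. -/
def bigF (n m T : ℕ) (A : Matrix (Fin n) (Fin n) ℝ) (B : Matrix (Fin n) (Fin m) ℝ) :
    Matrix (SIdx n T) (UIdx m T) ℝ :=
  (1 - Zshift n T * bigA n T A)⁻¹ * (Zshift n T * bigB n m T B)

/-- `𝐆 = (I − 𝐙𝐀)⁻¹`. -/
def bigG (n T : ℕ) (A : Matrix (Fin n) (Fin n) ℝ) : Matrix (SIdx n T) (SIdx n T) ℝ :=
  (1 - Zshift n T * bigA n T A)⁻¹

/-- The control cost `J_T(u, δ) = xᵀ𝐐x + uᵀ𝐑u` with `x = 𝐅u + 𝐆δ`. -/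
def costJ (n m T : ℕ) (A : Matrix (Fin n) (Fin n) ℝ) (B : Matrix (Fin n) (Fin m) ℝ)
    (Q : Matrix (Fin n) (Fin n) ℝ) (R : Matrix (Fin m) (Fin m) ℝ)
    (u : UIdx m T → ℝ) (δ : SIdx n T → ℝ) : ℝ :=
  let x := bigF n m T A B *ᵥ u + bigG n T A *ᵥ δ
  x ⬝ᵥ (bigQ n T Q *ᵥ x) + u ⬝ᵥ (bigR m T R *ᵥ u)

/-- `𝐏 = 𝐑 + 𝐅ᵀ𝐐𝐅`. -/
def bigP (n m T : ℕ) (A : Matrix (Fin n) (Fin n) ℝ) (B : Matrix (Fin n) (Fin m) ℝ)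
    (Q : Matrix (Fin n) (Fin n) ℝ) (R : Matrix (Fin m) (Fin m) ℝ) :
    Matrix (UIdx m T) (UIdx m T) ℝ :=
  bigR m T R + (bigF n m T A B)ᵀ * bigQ n T Q * bigF n m T A B

/-- The clairvoyant cost matrix `𝐂_T = 𝐆ᵀ𝐐(I + 𝐅𝐑⁻¹𝐅ᵀ𝐐)⁻¹𝐆`. -/
def Cmat (n m T : ℕ) (A : Matrix (Fin n) (Fin n) ℝ) (B : Matrix (Fin n) (Fin m) ℝ)
    (Q : Matrix (Fin n) (Fin n) ℝ) (R : Matrix (Fin m) (Fin m) ℝ) :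
    Matrix (SIdx n T) (SIdx n T) ℝ :=
  (bigG n T A)ᵀ * bigQ n T Q *
    (1 + bigF n m T A B * (bigR m T R)⁻¹ * (bigF n m T A B)ᵀ * bigQ n T Q)⁻¹ * bigG n T A

/-- Assemble `δ = col(x₀, w₀, …, w_{T−1})`. -/
def assemble (n T : ℕ) (x0 : Fin n → ℝ) (w : Fin T × Fin n → ℝ) : SIdx n T → ℝ :=
  fun p => if h : (p.1 : ℕ) = 0 then x0 p.2
    else w (⟨(p.1 : ℕ) - 1, by have := p.1.isLt; omega⟩, p.2)

/-- `𝐐̄ = blkdiag(I_T ⊗ Q, P)`. -/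
def bigQbar (n T : ℕ) (Q P : Matrix (Fin n) (Fin n) ℝ) : Matrix (SIdx n T) (SIdx n T) ℝ :=
  Matrix.of fun p q =>
    if p.1 = q.1 then (if (p.1 : ℕ) < T then Q p.2 q.2 else P p.2 q.2) else 0

/-- `𝐒̄ = blkdiag(𝐐̄, 𝐑)`. -/
def bigS (n m T : ℕ) (Q P : Matrix (Fin n) (Fin n) ℝ) (R : Matrix (Fin m) (Fin m) ℝ) :
    Matrix (SIdx n T ⊕ UIdx m T) (SIdx n T ⊕ UIdx m T) ℝ :=
  Matrix.fromBlocks (bigQbar n T Q P) 0 0 (bigR m T R)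

/-- The regret `Reg_T(Φx, Φu, γ, δ)` for `δ = col(x₀, w)`:
`col(Φxδ, Φuδ)ᵀ𝐒̄ col(Φxδ, Φuδ) − δᵀ𝐂_Tδ − γ²wᵀw`. -/
def RegT (n m T : ℕ) (A : Matrix (Fin n) (Fin n) ℝ) (B : Matrix (Fin n) (Fin m) ℝ)
    (Q : Matrix (Fin n) (Fin n) ℝ) (R : Matrix (Fin m) (Fin m) ℝ)
    (P : Matrix (Fin n) (Fin n) ℝ) (γ : ℝ)
    (Φx : Matrix (SIdx n T) (SIdx n T) ℝ) (Φu : Matrix (UIdx m T) (SIdx n T) ℝ)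
    (x0 : Fin n → ℝ) (w : Fin T × Fin n → ℝ) : ℝ :=
  let δ := assemble n T x0 w
  let z : SIdx n T ⊕ UIdx m T → ℝ := Sum.elim (Φx *ᵥ δ) (Φu *ᵥ δ)
  z ⬝ᵥ (bigS n m T Q P R *ᵥ z) - δ ⬝ᵥ (Cmat n m T A B Q R *ᵥ δ) - γ ^ 2 * (w ⬝ᵥ w)
/-- A pair of closed-loop responses is causal if both matrices are block lower
triangular (all blocks strictly above the block diagonal vanish). -/
def causalPair (n m T : ℕ) (Φx : Matrix (SIdx n T) (SIdx n T) ℝ)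
    (Φu : Matrix (UIdx m T) (SIdx n T) ℝ) : Prop :=
  (∀ p q : SIdx n T, (p.1 : ℕ) < (q.1 : ℕ) → Φx p q = 0) ∧
  (∀ (p : UIdx m T) (q : SIdx n T), (p.1 : ℕ) < (q.1 : ℕ) → Φu p q = 0)

/-- Achievability: `(I − 𝐙𝐀)Φx − 𝐙𝐁Φu = I`. -/
def achievablePair (n m T : ℕ) (A : Matrix (Fin n) (Fin n) ℝ) (B : Matrix (Fin n) (Fin m) ℝ)
    (Φx : Matrix (SIdx n T) (SIdx n T) ℝ) (Φu : Matrix (UIdx m T) (SIdx n T) ℝ) : Prop :=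
  (1 - Zshift n T * bigA n T A) * Φx - Zshift n T * bigB n m T B * Φu = 1

/-- Safety: for every disturbance sequence with components in `𝒲`, the closed-loop state
and input trajectories satisfy `(x_t, u_t) ∈ 𝒵` for `t = 0, …, T−1` and `x_T ∈ 𝒵_f`. -/
def safePair (n m T : ℕ) (W : Set (Fin n → ℝ))
    (Zc : Set ((Fin n → ℝ) × (Fin m → ℝ))) (Zf : Set (Fin n → ℝ))
    (x0 : Fin n → ℝ) (Φx : Matrix (SIdx n T) (SIdx n T) ℝ)
    (Φu : Matrix (UIdx m T) (SIdx n T) ℝ) : Prop :=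
  ∀ w : Fin T × Fin n → ℝ, (∀ t : Fin T, (fun p => w (t, p)) ∈ W) →
    (∀ t : Fin T,
      ((fun p => (Φx *ᵥ assemble n T x0 w) (t.castSucc, p)),
        (fun q => (Φu *ᵥ assemble n T x0 w) (t, q))) ∈ Zc) ∧
    (fun p => (Φx *ᵥ assemble n T x0 w) (Fin.last T, p)) ∈ Zf

/-- `Φ_w`: the last `Tn` columns of `col(Φx, Φu)`. -/
def stackW (n m T : ℕ) (Φx : Matrix (SIdx n T) (SIdx n T) ℝ)
    (Φu : Matrix (UIdx m T) (SIdx n T) ℝ) :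
    Matrix (SIdx n T ⊕ UIdx m T) (Fin T × Fin n) ℝ :=
  Matrix.of fun r c =>
    Sum.elim (fun p => Φx p (c.1.succ, c.2)) (fun q => Φu q (c.1.succ, c.2)) r

/-- The linear matrix inequality `γ²I + 𝐂_T^{[1:T,1:T]} − Φ_wᵀ𝐒̄Φ_w ⪰ 0`. -/
def lmiOK (n m T : ℕ) (A : Matrix (Fin n) (Fin n) ℝ) (B : Matrix (Fin n) (Fin m) ℝ)
    (Q : Matrix (Fin n) (Fin n) ℝ) (R : Matrix (Fin m) (Fin m) ℝ)
    (P : Matrix (Fin n) (Fin n) ℝ) (γ : ℝ)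
    (Φx : Matrix (SIdx n T) (SIdx n T) ℝ) (Φu : Matrix (UIdx m T) (SIdx n T) ℝ) : Prop :=
  (γ ^ 2 • (1 : Matrix (Fin T × Fin n) (Fin T × Fin n) ℝ) +
    (Cmat n m T A B Q R).submatrix
      (fun c : Fin T × Fin n => ((c.1.succ : Fin (T + 1)), c.2))
      (fun c : Fin T × Fin n => ((c.1.succ : Fin (T + 1)), c.2)) -
    (stackW n m T Φx Φu)ᵀ * bigS n m T Q P R * stackW n m T Φx Φu).PosSemidef

/-- Membership in `Π_T^γ(x₀)`: causal, achievable, safe, and satisfying the LMI. -/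
def memPi (n m T : ℕ) (A : Matrix (Fin n) (Fin n) ℝ) (B : Matrix (Fin n) (Fin m) ℝ)
    (Q : Matrix (Fin n) (Fin n) ℝ) (R : Matrix (Fin m) (Fin m) ℝ)
    (P : Matrix (Fin n) (Fin n) ℝ) (W : Set (Fin n → ℝ))
    (Zc : Set ((Fin n → ℝ) × (Fin m → ℝ))) (Zf : Set (Fin n → ℝ))
    (γ : ℝ) (x0 : Fin n → ℝ)
    (Φx : Matrix (SIdx n T) (SIdx n T) ℝ) (Φu : Matrix (UIdx m T) (SIdx n T) ℝ) : Prop :=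
  causalPair n m T Φx Φu ∧ achievablePair n m T A B Φx Φu ∧
    safePair n m T W Zc Zf x0 Φx Φu ∧ lmiOK n m T A B Q R P γ Φx Φu

/-- The feasible set `X_T^γ = {x : Π_T^γ(x) ≠ ∅}`. -/
def Xset (n m T : ℕ) (A : Matrix (Fin n) (Fin n) ℝ) (B : Matrix (Fin n) (Fin m) ℝ)
    (Q : Matrix (Fin n) (Fin n) ℝ) (R : Matrix (Fin m) (Fin m) ℝ)
    (P : Matrix (Fin n) (Fin n) ℝ) (W : Set (Fin n → ℝ))
    (Zc : Set ((Fin n → ℝ) × (Fin m → ℝ))) (Zf : Set (Fin n → ℝ))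
    (γ : ℝ) : Set (Fin n → ℝ) :=
  {x | ∃ Φx Φu, memPi n m T A B Q R P W Zc Zf γ x Φx Φu}
/-- The minimum gain function `γ*_T(x) = inf {γ ≥ 0 : Π_T^γ(x) ≠ ∅}`. -/
def gammaStar (n m T : ℕ) (A : Matrix (Fin n) (Fin n) ℝ) (B : Matrix (Fin n) (Fin m) ℝ)
    (Q : Matrix (Fin n) (Fin n) ℝ) (R : Matrix (Fin m) (Fin m) ℝ)
    (P : Matrix (Fin n) (Fin n) ℝ) (W : Set (Fin n → ℝ))
    (Zc : Set ((Fin n → ℝ) × (Fin m → ℝ))) (Zf : Set (Fin n → ℝ))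
    (x : Fin n → ℝ) : ℝ :=
  sInf {γ : ℝ | 0 ≤ γ ∧ ∃ Φx Φu, memPi n m T A B Q R P W Zc Zf γ x Φx Φu}

/-! A feasible response over horizon `T` is prolonged by one step of the terminal controller
`u_T = K x_T`. Since the Riccati equation has cost-to-go `P̄`, which absorbs the worst
disturbance, `xᵀPx` is a storage function: the additional stage cost together with the new terminal
cost exceeds the old terminal cost by at most `γ_f²|w_T|²`. The clairvoyant cost, on the other hand,
is a minimum over trajectories, and truncating an optimal trajectory over `T + 1` steps gives a
competitor over `T` steps, so it does not decrease with the horizon. As the matrix inequality says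
that the regret from `x₀ = 0` is nonpositive, the prolonged response attains `max γ_f γ` whenever
the original one attains `γ`. -/

section CompletingTheSquare

variable {ι κ α : Type*} [Fintype ι] [Fintype κ] [CommRing α]

theorem dotProduct_mulVec_comm_of_isSymm {M : Matrix ι ι α} (hM : M.IsSymm) (x y : ι → α) :
    x ⬝ᵥ M *ᵥ y = y ⬝ᵥ M *ᵥ x := by
  rw [← dotProduct_transpose_mulVec, hM.eq]

theorem dotProduct_transpose_mul_mul_mulVec (F : Matrix ι κ α) (M : Matrix ι ι α) (x : κ → α) :
    x ⬝ᵥ (Fᵀ * M * F) *ᵥ x = (F *ᵥ x) ⬝ᵥ M *ᵥ (F *ᵥ x) := by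
  rw [Matrix.mul_assoc, ← mulVec_mulVec, ← mulVec_mulVec, dotProduct_transpose_mulVec,
    dotProduct_comm]

theorem dotProduct_mulVec_add_of_isSymm {M : Matrix ι ι α} (hM : M.IsSymm) (x y : ι → α) :
    (x + y) ⬝ᵥ M *ᵥ (x + y) = x ⬝ᵥ M *ᵥ x + 2 * (x ⬝ᵥ M *ᵥ y) + y ⬝ᵥ M *ᵥ y := by
  rw [mulVec_add, add_dotProduct, dotProduct_add, dotProduct_add,
    dotProduct_mulVec_comm_of_isSymm hM y x]
  ring

theorem complete_square [DecidableEq ι] {M : Matrix ι ι α} (hM : M.IsSymm) (hunit : IsUnit M)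
    (x y : ι → α) :
    x ⬝ᵥ M *ᵥ x + 2 * (x ⬝ᵥ y) =
      (x + M⁻¹ *ᵥ y) ⬝ᵥ M *ᵥ (x + M⁻¹ *ᵥ y) - y ⬝ᵥ M⁻¹ *ᵥ y := by
  have hinv : M *ᵥ M⁻¹ *ᵥ y = y := by
    rw [mulVec_mulVec, mul_nonsing_inv M ((isUnit_iff_isUnit_det M).1 hunit), one_mulVec]
  rw [dotProduct_mulVec_add_of_isSymm hM, hinv, dotProduct_comm (M⁻¹ *ᵥ y)]
  ring

/-- The control `-(R + FᵀQF)⁻¹FᵀQy` minimizing `u ↦ (Fu + y)ᵀQ(Fu + y) + uᵀRu`. -/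
def optimalControl [DecidableEq κ] (F : Matrix ι κ α) (Q : Matrix ι ι α) (R : Matrix κ κ α)
    (y : ι → α) : κ → α :=
  -((R + Fᵀ * Q * F)⁻¹ *ᵥ Fᵀ *ᵥ Q *ᵥ y)

theorem quadraticCost_eq_minimum_add_square [DecidableEq κ] (F : Matrix ι κ α)
    {Q : Matrix ι ι α} {R : Matrix κ κ α} (hQ : Q.IsSymm) (hR : R.IsSymm)
    (hunit : IsUnit (R + Fᵀ * Q * F)) (u : κ → α) (y : ι → α) :
    (F *ᵥ u + y) ⬝ᵥ Q *ᵥ (F *ᵥ u + y) + u ⬝ᵥ R *ᵥ u =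
      y ⬝ᵥ (Q - Q * F * (R + Fᵀ * Q * F)⁻¹ * Fᵀ * Q) *ᵥ y +
        (u - optimalControl F Q R y) ⬝ᵥ (R + Fᵀ * Q * F) *ᵥ (u - optimalControl F Q R y) := by
  have hsymm : (R + Fᵀ * Q * F).IsSymm := by
    simp only [IsSymm, transpose_add, transpose_mul, transpose_transpose, hQ.eq, hR.eq,
      Matrix.mul_assoc]
  have hcross : (F *ᵥ u) ⬝ᵥ Q *ᵥ y = u ⬝ᵥ Fᵀ *ᵥ Q *ᵥ y := by
    rw [dotProduct_transpose_mulVec, dotProduct_comm]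
  have hmin : y ⬝ᵥ (Q * F * (R + Fᵀ * Q * F)⁻¹ * Fᵀ * Q) *ᵥ y =
      (Fᵀ *ᵥ Q *ᵥ y) ⬝ᵥ (R + Fᵀ * Q * F)⁻¹ *ᵥ Fᵀ *ᵥ Q *ᵥ y := by
    have hfactor : Q * F * (R + Fᵀ * Q * F)⁻¹ * Fᵀ * Q =
        (Fᵀ * Q)ᵀ * (R + Fᵀ * Q * F)⁻¹ * (Fᵀ * Q) := by
      simp only [transpose_mul, transpose_transpose, hQ.eq, Matrix.mul_assoc]
    rw [hfactor, dotProduct_transpose_mul_mul_mulVec, mulVec_mulVec y Fᵀ Q]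
  have hsquare := complete_square hsymm hunit u (Fᵀ *ᵥ Q *ᵥ y)
  rw [add_mulVec, dotProduct_add, dotProduct_transpose_mul_mul_mulVec] at hsquare
  rw [optimalControl, sub_neg_eq_add, dotProduct_mulVec_add_of_isSymm hQ, hcross, sub_mulVec,
    dotProduct_sub, hmin]
  linear_combination hsquare

theorem inv_one_add_mul_inv_mul [DecidableEq ι] [DecidableEq κ] (U : Matrix ι κ α)
    (V : Matrix κ ι α) {R : Matrix κ κ α} (hR : IsUnit R) (hRVU : IsUnit (R + V * U)) :
    (1 + U * R⁻¹ * V)⁻¹ = 1 - U * (R + V * U)⁻¹ * V := by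
  have hcore : R⁻¹⁻¹ + V * (1 : Matrix ι ι α)⁻¹ * U = R + V * U := by
    rw [nonsing_inv_nonsing_inv R ((isUnit_iff_isUnit_det R).1 hR), inv_one, Matrix.mul_one]
  have hwoodbury := add_mul_mul_inv_eq_sub 1 U R⁻¹ V isUnit_one
    ((isUnit_nonsing_inv_iff).2 hR) (hcore ▸ hRVU)
  rwa [hcore, inv_one, Matrix.one_mul, Matrix.mul_one] at hwoodbury

end CompletingTheSquare

theorem posDef_add_transpose_mul_mul {ι κ : Type*} [Fintype ι] [Finite κ] (F : Matrix ι κ ℝ)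
    {Q : Matrix ι ι ℝ} {R : Matrix κ κ ℝ} (hQ : Q.PosSemidef) (hR : R.PosDef) :
    (R + Fᵀ * Q * F).PosDef :=
  hR.add_posSemidef (hQ.conjTranspose_mul_mul_same F)

section WorstCase

variable {ι : Type*} [Fintype ι] [DecidableEq ι] {P : Matrix ι ι ℝ} {γ : ℝ}

/-- The matrix `P̄ = P + P(γ²I − P)⁻¹P`, representing the quadratic form
`y ↦ max_w ((y + w)ᵀP(y + w) − γ²wᵀw)`. -/
def worstCaseMatrix (γ : ℝ) (P : Matrix ι ι ℝ) : Matrix ι ι ℝ :=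
  P + P * (γ ^ 2 • (1 : Matrix ι ι ℝ) - P)⁻¹ * P

theorem posSemidef_worstCaseMatrix (hP : P.PosSemidef)
    (hγP : (γ ^ 2 • (1 : Matrix ι ι ℝ) - P).PosDef) : (worstCaseMatrix γ P).PosSemidef := by
  have hquad := hγP.inv.posSemidef.conjTranspose_mul_mul_same P
  rw [hP.isHermitian.eq] at hquad
  exact hP.add hquad

theorem dotProduct_mulVec_add_le_worstCaseMatrix (hP : P.IsSymm)
    (hγP : (γ ^ 2 • (1 : Matrix ι ι ℝ) - P).PosDef) (y w : ι → ℝ) :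
    (y + w) ⬝ᵥ P *ᵥ (y + w) ≤ y ⬝ᵥ worstCaseMatrix γ P *ᵥ y + γ ^ 2 * (w ⬝ᵥ w) := by
  set M := γ ^ 2 • (1 : Matrix ι ι ℝ) - P with hM
  have hsquare := complete_square (isHermitian_iff_isSymm.1 hγP.isHermitian) hγP.isUnit w
    (-(P *ᵥ y))
  have hnonneg : 0 ≤ (w + M⁻¹ *ᵥ -(P *ᵥ y)) ⬝ᵥ M *ᵥ (w + M⁻¹ *ᵥ -(P *ᵥ y)) :=
    hγP.posSemidef.dotProduct_mulVec_nonneg _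
  have hworst : y ⬝ᵥ worstCaseMatrix γ P *ᵥ y =
      y ⬝ᵥ P *ᵥ y + (P *ᵥ y) ⬝ᵥ M⁻¹ *ᵥ P *ᵥ y := by
    rw [worstCaseMatrix, add_mulVec, dotProduct_add, ← dotProduct_transpose_mul_mul_mulVec, hP.eq]
  have hsupply : w ⬝ᵥ M *ᵥ w = γ ^ 2 * (w ⬝ᵥ w) - w ⬝ᵥ P *ᵥ w := by
    rw [hM, sub_mulVec, dotProduct_sub, smul_mulVec, one_mulVec, dotProduct_smul, smul_eq_mul]
  simp only [mulVec_neg, dotProduct_neg, neg_dotProduct, neg_neg] at hsquare hnonneg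
  rw [dotProduct_mulVec_add_of_isSymm hP, hworst, dotProduct_mulVec_comm_of_isSymm hP y w]
  linarith

end WorstCase

section TerminalController

variable {ι κ : Type*} [Fintype ι] [Fintype κ]

/-- The dissipation inequality of the closed loop `x ↦ (A + BK)x + w`: along it the storage
function `xᵀPx` pays for the stage cost up to the supply `γ²wᵀw`. -/
def TerminalDissipation (A : Matrix ι ι ℝ) (B : Matrix ι κ ℝ) (Q : Matrix ι ι ℝ)
    (R : Matrix κ κ ℝ) (P : Matrix ι ι ℝ) (K : Matrix κ ι ℝ) (γ : ℝ) : Prop :=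
  ∀ x w : ι → ℝ,
    x ⬝ᵥ Q *ᵥ x + (K *ᵥ x) ⬝ᵥ R *ᵥ (K *ᵥ x) +
        ((A + B * K) *ᵥ x + w) ⬝ᵥ P *ᵥ ((A + B * K) *ᵥ x + w) ≤
      x ⬝ᵥ P *ᵥ x + γ ^ 2 * (w ⬝ᵥ w)

variable [DecidableEq κ] {A : Matrix ι ι ℝ} {B : Matrix ι κ ℝ} {Q : Matrix ι ι ℝ}
  {R : Matrix κ κ ℝ}

/-- The feedback gain `-(R + BᵀP̄B)⁻¹BᵀP̄A` of the Riccati equation with cost-to-go `P̄`. -/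
def riccatiGain (A : Matrix ι ι ℝ) (B : Matrix ι κ ℝ) (R : Matrix κ κ ℝ) (Pbar : Matrix ι ι ℝ) :
    Matrix κ ι ℝ :=
  -((R + Bᵀ * Pbar * B)⁻¹ * Bᵀ * Pbar * A)

theorem riccatiGain_mulVec (Pbar : Matrix ι ι ℝ) (x : ι → ℝ) :
    riccatiGain A B R Pbar *ᵥ x = optimalControl B Pbar R (A *ᵥ x) := by
  simp only [riccatiGain, optimalControl, neg_mulVec, mulVec_mulVec, Matrix.mul_assoc]

theorem riccatiGain_cost_eq {Pbar : Matrix ι ι ℝ} (hR : R.PosDef) (hPbar : Pbar.PosSemidef)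
    (x : ι → ℝ) :
    ((A + B * riccatiGain A B R Pbar) *ᵥ x) ⬝ᵥ Pbar *ᵥ ((A + B * riccatiGain A B R Pbar) *ᵥ x) +
        (riccatiGain A B R Pbar *ᵥ x) ⬝ᵥ R *ᵥ (riccatiGain A B R Pbar *ᵥ x) =
      x ⬝ᵥ (Aᵀ * Pbar * A - Aᵀ * Pbar * B * (R + Bᵀ * Pbar * B)⁻¹ * Bᵀ * Pbar * A) *ᵥ x := by
  have hstate : (A + B * riccatiGain A B R Pbar) *ᵥ x =
      B *ᵥ riccatiGain A B R Pbar *ᵥ x + A *ᵥ x := by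
    rw [add_mulVec, mulVec_mulVec, add_comm]
  have hvalue : Aᵀ * Pbar * A - Aᵀ * Pbar * B * (R + Bᵀ * Pbar * B)⁻¹ * Bᵀ * Pbar * A =
      Aᵀ * (Pbar - Pbar * B * (R + Bᵀ * Pbar * B)⁻¹ * Bᵀ * Pbar) * A := by
    simp only [Matrix.mul_sub, Matrix.sub_mul, Matrix.mul_assoc]
  rw [hstate, hvalue, dotProduct_transpose_mul_mul_mulVec,
    quadraticCost_eq_minimum_add_square B (isHermitian_iff_isSymm.1 hPbar.isHermitian)
      (isHermitian_iff_isSymm.1 hR.isHermitian) (posDef_add_transpose_mul_mul B hPbar hR).isUnit,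
    riccatiGain_mulVec, sub_self, zero_dotProduct, add_zero]

theorem terminalDissipation_of_riccati [DecidableEq ι] {P : Matrix ι ι ℝ} {γ : ℝ}
    (hR : R.PosDef) (hP : P.PosSemidef) (hγP : (γ ^ 2 • (1 : Matrix ι ι ℝ) - P).PosDef)
    (hRic : P = Q + Aᵀ * worstCaseMatrix γ P * A -
      Aᵀ * worstCaseMatrix γ P * B * (R + Bᵀ * worstCaseMatrix γ P * B)⁻¹ * Bᵀ *
        worstCaseMatrix γ P * A) :
    TerminalDissipation A B Q R P (riccatiGain A B R (worstCaseMatrix γ P)) γ := by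
  intro x w
  have hcost := riccatiGain_cost_eq (A := A) (B := B) hR (posSemidef_worstCaseMatrix hP hγP) x
  set K := riccatiGain A B R (worstCaseMatrix γ P)
  calc
    _ ≤ x ⬝ᵥ Q *ᵥ x + (K *ᵥ x) ⬝ᵥ R *ᵥ (K *ᵥ x) +
        (((A + B * K) *ᵥ x) ⬝ᵥ worstCaseMatrix γ P *ᵥ ((A + B * K) *ᵥ x) +
          γ ^ 2 * (w ⬝ᵥ w)) := by
      gcongr
      exact dotProduct_mulVec_add_le_worstCaseMatrix
        (isHermitian_iff_isSymm.1 hP.isHermitian) hγP _ _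
    _ = x ⬝ᵥ P *ᵥ x + γ ^ 2 * (w ⬝ᵥ w) := by
      conv_rhs => rw [hRic, add_sub_assoc, Matrix.add_mulVec Q, dotProduct_add, ← hcost]
      ring

end TerminalController

section TimeBlocks

variable {τ ι κ : Type*}

/-- The vector `v_t` of a stacked trajectory `v = col(v_t)_t`. -/
def timeBlock (v : τ × ι → ℝ) (t : τ) : ι → ℝ := fun k => v (t, k)

/-- A stacked trajectory without its last vector. -/
def dropLastBlock {T : ℕ} (v : Fin (T + 1) × ι → ℝ) : Fin T × ι → ℝ :=
  fun p => v (p.1.castSucc, p.2)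

theorem timeBlock_ext {v w : τ × ι → ℝ} (h : ∀ t, timeBlock v t = timeBlock w t) : v = w :=
  funext fun p => congrFun (h p.1) p.2

theorem timeBlock_zero (t : τ) : timeBlock (0 : τ × ι → ℝ) t = 0 :=
  rfl

theorem timeBlock_add (v w : τ × ι → ℝ) (t : τ) :
    timeBlock (v + w) t = timeBlock v t + timeBlock w t :=
  rfl

theorem timeBlock_dropLastBlock {T : ℕ} (v : Fin (T + 1) × ι → ℝ) (t : Fin T) :
    timeBlock (dropLastBlock v) t = timeBlock v t.castSucc :=
  rfl

theorem dotProduct_eq_sum_timeBlock [Fintype τ] [Fintype ι] (v w : τ × ι → ℝ) :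
    v ⬝ᵥ w = ∑ t, timeBlock v t ⬝ᵥ timeBlock w t :=
  Fintype.sum_prod_type _

variable [DecidableEq τ]

/-- The block diagonal matrix acting on stacked trajectories by `D t` at time `t`; it differs from
`Matrix.blockDiagonal` only in that the block index comes first. -/
def timeDiagonal (D : τ → Matrix ι κ ℝ) : Matrix (τ × ι) (τ × κ) ℝ :=
  (blockDiagonal D).submatrix Prod.swap Prod.swap

theorem isHermitian_timeDiagonal {D : τ → Matrix ι ι ℝ} (hD : ∀ t, (D t).IsHermitian) :
    (timeDiagonal D).IsHermitian :=
  (isHermitian_blockDiagonal_iff.2 hD).submatrix _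

theorem timeBlock_timeDiagonal_mulVec [Fintype τ] [Fintype κ] (D : τ → Matrix ι κ ℝ)
    (v : τ × κ → ℝ) (t : τ) : timeBlock (timeDiagonal D *ᵥ v) t = D t *ᵥ timeBlock v t := by
  ext i
  simp [timeBlock, timeDiagonal, mulVec, dotProduct, blockDiagonal_apply, Fintype.sum_prod_type,
    ite_mul]

theorem dotProduct_timeDiagonal_mulVec [Fintype τ] [Fintype ι] (D : τ → Matrix ι ι ℝ)
    (v : τ × ι → ℝ) : v ⬝ᵥ timeDiagonal D *ᵥ v = ∑ t, timeBlock v t ⬝ᵥ D t *ᵥ timeBlock v t := by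
  simp only [dotProduct_eq_sum_timeBlock, timeBlock_timeDiagonal_mulVec]

theorem posSemidef_timeDiagonal [Finite τ] [Finite ι] {D : τ → Matrix ι ι ℝ}
    (hD : ∀ t, (D t).PosSemidef) : (timeDiagonal D).PosSemidef := by
  cases nonempty_fintype τ
  cases nonempty_fintype ι
  refine .of_dotProduct_mulVec_nonneg (isHermitian_timeDiagonal fun t => (hD t).isHermitian) ?_
  intro v
  rw [star_trivial, dotProduct_timeDiagonal_mulVec]
  exact Finset.sum_nonneg fun t _ => (hD t).dotProduct_mulVec_nonneg _

theorem posDef_timeDiagonal [Finite τ] [Finite ι] {D : τ → Matrix ι ι ℝ}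
    (hD : ∀ t, (D t).PosDef) : (timeDiagonal D).PosDef := by
  cases nonempty_fintype τ
  cases nonempty_fintype ι
  refine .of_dotProduct_mulVec_pos (isHermitian_timeDiagonal fun t => (hD t).isHermitian) ?_
  intro v hv
  obtain ⟨t, ht⟩ : ∃ t, timeBlock v t ≠ 0 := by
    by_contra! hzero
    exact hv (timeBlock_ext hzero)
  rw [star_trivial, dotProduct_timeDiagonal_mulVec]
  exact Finset.sum_pos' (fun s _ => (hD s).posSemidef.dotProduct_mulVec_nonneg _)
    ⟨t, Finset.mem_univ t, (hD t).dotProduct_mulVec_pos ht⟩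

end TimeBlocks

section StackedMatrices

variable {n m T : ℕ}

theorem bigA_eq_timeDiagonal (A : Matrix (Fin n) (Fin n) ℝ) :
    bigA n T A = timeDiagonal fun _ => A := by
  ext p q
  simp [bigA, timeDiagonal, blockDiagonal_apply]

theorem bigR_eq_timeDiagonal (R : Matrix (Fin m) (Fin m) ℝ) :
    bigR m T R = timeDiagonal fun _ => R := by
  ext p q
  simp [bigR, timeDiagonal, blockDiagonal_apply]

theorem bigQbar_eq_timeDiagonal (Q P : Matrix (Fin n) (Fin n) ℝ) :
    bigQbar n T Q P = timeDiagonal fun t : Fin (T + 1) => if (t : ℕ) < T then Q else P := by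
  ext p q
  simp only [bigQbar, timeDiagonal, blockDiagonal_apply, of_apply, submatrix_apply, Prod.fst_swap,
    Prod.snd_swap, apply_ite (fun M : Matrix (Fin n) (Fin n) ℝ => M p.2 q.2)]

theorem bigQ_eq_bigQbar_zero (Q : Matrix (Fin n) (Fin n) ℝ) : bigQ n T Q = bigQbar n T Q 0 := by
  ext p q
  simp only [bigQ, bigQbar, of_apply, ite_and, Matrix.zero_apply]

theorem timeBlock_Zshift_mulVec_zero (v : SIdx n T → ℝ) : timeBlock (Zshift n T *ᵥ v) 0 = 0 := by
  ext i
  simp [timeBlock, Zshift, mulVec, dotProduct]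

theorem timeBlock_Zshift_mulVec_succ (v : SIdx n T → ℝ) (t : Fin T) :
    timeBlock (Zshift n T *ᵥ v) t.succ = timeBlock v t.castSucc := by
  ext i
  have hrow (q : SIdx n T) : Zshift n T (t.succ, i) q = if (t.castSucc, i) = q then 1 else 0 := by
    simp [Zshift, Prod.ext_iff, Fin.ext_iff]
  simp [timeBlock, mulVec, dotProduct, hrow]

theorem timeBlock_bigB_mulVec_castSucc (B : Matrix (Fin n) (Fin m) ℝ) (u : UIdx m T → ℝ)
    (t : Fin T) : timeBlock (bigB n m T B *ᵥ u) t.castSucc = B *ᵥ timeBlock u t := by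
  ext i
  simp [timeBlock, bigB, mulVec, dotProduct, Fintype.sum_prod_type, ite_mul, Fin.val_inj]

theorem dotProduct_bigR_mulVec (R : Matrix (Fin m) (Fin m) ℝ) (u : UIdx m T → ℝ) :
    u ⬝ᵥ bigR m T R *ᵥ u = ∑ t, timeBlock u t ⬝ᵥ R *ᵥ timeBlock u t := by
  rw [bigR_eq_timeDiagonal, dotProduct_timeDiagonal_mulVec]

theorem dotProduct_bigQbar_mulVec (Q P : Matrix (Fin n) (Fin n) ℝ) (x : SIdx n T → ℝ) :
    x ⬝ᵥ bigQbar n T Q P *ᵥ x =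
      ∑ t : Fin T, timeBlock x t.castSucc ⬝ᵥ Q *ᵥ timeBlock x t.castSucc +
        timeBlock x (Fin.last T) ⬝ᵥ P *ᵥ timeBlock x (Fin.last T) := by
  simp [bigQbar_eq_timeDiagonal, dotProduct_timeDiagonal_mulVec, Fin.sum_univ_castSucc]

theorem isHermitian_bigQbar {Q P : Matrix (Fin n) (Fin n) ℝ} (hQ : Q.IsHermitian)
    (hP : P.IsHermitian) : (bigQbar n T Q P).IsHermitian := by
  rw [bigQbar_eq_timeDiagonal]
  exact isHermitian_timeDiagonal fun t => by split_ifs <;> assumption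

theorem posSemidef_bigQ {Q : Matrix (Fin n) (Fin n) ℝ} (hQ : Q.PosSemidef) :
    (bigQ n T Q).PosSemidef := by
  rw [bigQ_eq_bigQbar_zero, bigQbar_eq_timeDiagonal]
  exact posSemidef_timeDiagonal fun t => by split_ifs <;> [exact hQ; exact .zero]

theorem posDef_bigR {R : Matrix (Fin m) (Fin m) ℝ} (hR : R.PosDef) : (bigR m T R).PosDef := by
  rw [bigR_eq_timeDiagonal]
  exact posDef_timeDiagonal fun _ => hR

end StackedMatrices

section Trajectories

variable {n m T : ℕ} {A : Matrix (Fin n) (Fin n) ℝ} {B : Matrix (Fin n) (Fin m) ℝ}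

/-- The stacked states `x` and inputs `u` obey `x₀ = δ₀` and `x_{t+1} = A x_t + B u_t + δ_{t+1}`,
where `δ = col(x₀, w₀, …, w_{T−1})` stacks the initial state and the disturbances. -/
def IsTrajectory (A : Matrix (Fin n) (Fin n) ℝ) (B : Matrix (Fin n) (Fin m) ℝ)
    (x : SIdx n T → ℝ) (u : UIdx m T → ℝ) (δ : SIdx n T → ℝ) : Prop :=
  timeBlock x 0 = timeBlock δ 0 ∧ ∀ t : Fin T,
    timeBlock x t.succ =
      A *ᵥ timeBlock x t.castSucc + B *ᵥ timeBlock u t + timeBlock δ t.succ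

theorem isTrajectory_iff_mulVec_eq {x : SIdx n T → ℝ} {u : UIdx m T → ℝ} {δ : SIdx n T → ℝ} :
    IsTrajectory A B x u δ ↔
      (1 - Zshift n T * bigA n T A) *ᵥ x = (Zshift n T * bigB n m T B) *ᵥ u + δ := by
  have hdyn : (1 - Zshift n T * bigA n T A) *ᵥ x = (Zshift n T * bigB n m T B) *ᵥ u + δ ↔
      x = Zshift n T *ᵥ (bigA n T A *ᵥ x + bigB n m T B *ᵥ u) + δ := by
    rw [sub_mulVec, one_mulVec, sub_eq_iff_eq_add', mulVec_add, mulVec_mulVec, mulVec_mulVec,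
      add_assoc]
  have hzero : timeBlock (Zshift n T *ᵥ (bigA n T A *ᵥ x + bigB n m T B *ᵥ u) + δ) 0 =
      timeBlock δ 0 := by
    rw [timeBlock_add, timeBlock_Zshift_mulVec_zero, zero_add]
  have hsucc (t : Fin T) :
      timeBlock (Zshift n T *ᵥ (bigA n T A *ᵥ x + bigB n m T B *ᵥ u) + δ) t.succ =
        A *ᵥ timeBlock x t.castSucc + B *ᵥ timeBlock u t + timeBlock δ t.succ := by
    rw [timeBlock_add, timeBlock_Zshift_mulVec_succ, timeBlock_add, bigA_eq_timeDiagonal,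
      timeBlock_timeDiagonal_mulVec, timeBlock_bigB_mulVec_castSucc]
  rw [hdyn, IsTrajectory, ← hzero]
  simp only [← hsucc]
  refine ⟨fun ⟨h0, hstep⟩ => timeBlock_ext (Fin.cases h0 hstep), fun hx => ?_⟩
  rw [← hx]
  exact ⟨rfl, fun _ => rfl⟩

theorem achievablePair_iff_forall_isTrajectory {Φx : Matrix (SIdx n T) (SIdx n T) ℝ}
    {Φu : Matrix (UIdx m T) (SIdx n T) ℝ} :
    achievablePair n m T A B Φx Φu ↔ ∀ δ, IsTrajectory A B (Φx *ᵥ δ) (Φu *ᵥ δ) δ := by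
  simp only [isTrajectory_iff_mulVec_eq, ← sub_eq_iff_eq_add', mulVec_mulVec, ← sub_mulVec]
  refine ⟨fun h δ => ?_, fun h => ext_of_mulVec_single fun i => ?_⟩
  · rw [h, one_mulVec]
  · rw [one_mulVec, h]

theorem isUnit_one_sub_Zshift_mul_bigA (A : Matrix (Fin n) (Fin n) ℝ) :
    IsUnit (1 - Zshift n T * bigA n T A) := by
  rw [← mulVec_injective_iff_isUnit, ← coe_mulVecLin, ← LinearMap.ker_eq_bot,
    LinearMap.ker_eq_bot']
  intro x hx
  have htraj : IsTrajectory A (0 : Matrix (Fin n) (Fin 0) ℝ) x 0 0 := by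
    rw [isTrajectory_iff_mulVec_eq, mulVec_zero, zero_add]
    exact hx
  refine timeBlock_ext (Fin.induction htraj.1 fun t ih => ?_)
  simp only [htraj.2, ih, timeBlock_zero, mulVec_zero, add_zero]

theorem isTrajectory_iff_eq_bigF_add_bigG {x : SIdx n T → ℝ} {u : UIdx m T → ℝ}
    {δ : SIdx n T → ℝ} :
    IsTrajectory A B x u δ ↔ x = bigF n m T A B *ᵥ u + bigG n T A *ᵥ δ := by
  have hunit := isUnit_one_sub_Zshift_mul_bigA (T := T) A
  have hdet := (isUnit_iff_isUnit_det _).1 hunit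
  rw [isTrajectory_iff_mulVec_eq, bigF, bigG, ← mulVec_mulVec u (_)⁻¹, ← mulVec_add,
    ← (mulVec_injective_iff_isUnit.2 hunit).eq_iff (a := x), mulVec_mulVec,
    mul_nonsing_inv _ hdet, one_mulVec]

theorem IsTrajectory.dropLastBlock {x : SIdx n (T + 1) → ℝ} {u : UIdx m (T + 1) → ℝ}
    {δ : SIdx n (T + 1) → ℝ} (h : IsTrajectory A B x u δ) :
    IsTrajectory A B (dropLastBlock x) (dropLastBlock u) (dropLastBlock δ) :=
  ⟨h.1, fun t => h.2 t.castSucc⟩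

end Trajectories

section ClairvoyantCost

variable {n m T : ℕ} {A : Matrix (Fin n) (Fin n) ℝ} {B : Matrix (Fin n) (Fin m) ℝ}
  {Q : Matrix (Fin n) (Fin n) ℝ} {R : Matrix (Fin m) (Fin m) ℝ}

/-- The cost `∑_{t < T} (x_tᵀQx_t + u_tᵀRu_t)`, without terminal cost. -/
def stageCost (Q : Matrix (Fin n) (Fin n) ℝ) (R : Matrix (Fin m) (Fin m) ℝ)
    (x : SIdx n T → ℝ) (u : UIdx m T → ℝ) : ℝ :=
  ∑ t : Fin T, (timeBlock x t.castSucc ⬝ᵥ Q *ᵥ timeBlock x t.castSucc +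
    timeBlock u t ⬝ᵥ R *ᵥ timeBlock u t)

theorem stageCost_succ (x : SIdx n (T + 1) → ℝ) (u : UIdx m (T + 1) → ℝ) :
    stageCost Q R x u = stageCost Q R (dropLastBlock x) (dropLastBlock u) +
      (timeBlock x (Fin.last T).castSucc ⬝ᵥ Q *ᵥ timeBlock x (Fin.last T).castSucc +
        timeBlock u (Fin.last T) ⬝ᵥ R *ᵥ timeBlock u (Fin.last T)) :=
  Fin.sum_univ_castSucc _

theorem stageCost_dropLastBlock_le (hQ : Q.PosSemidef) (hR : R.PosSemidef)
    (x : SIdx n (T + 1) → ℝ) (u : UIdx m (T + 1) → ℝ) :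
    stageCost Q R (dropLastBlock x) (dropLastBlock u) ≤ stageCost Q R x u := by
  rw [stageCost_succ]
  exact le_add_of_nonneg_right
    (add_nonneg (hQ.dotProduct_mulVec_nonneg _) (hR.dotProduct_mulVec_nonneg _))

theorem costJ_eq_stageCost {x : SIdx n T → ℝ} {u : UIdx m T → ℝ} {δ : SIdx n T → ℝ}
    (h : IsTrajectory A B x u δ) : costJ n m T A B Q R u δ = stageCost Q R x u := by
  simp only [costJ, ← isTrajectory_iff_eq_bigF_add_bigG.1 h, bigQ_eq_bigQbar_zero,
    dotProduct_bigQbar_mulVec, zero_mulVec, dotProduct_zero, add_zero, dotProduct_bigR_mulVec,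
    stageCost, Finset.sum_add_distrib]

theorem posDef_bigP (hQ : Q.PosSemidef) (hR : R.PosDef) : (bigP n m T A B Q R).PosDef :=
  posDef_add_transpose_mul_mul _ (posSemidef_bigQ hQ) (posDef_bigR hR)

theorem Cmat_eq_transpose_mul_mul (hQ : Q.PosSemidef) (hR : R.PosDef) :
    Cmat n m T A B Q R =
      (bigG n T A)ᵀ * (bigQ n T Q - bigQ n T Q * bigF n m T A B * (bigP n m T A B Q R)⁻¹ *
        (bigF n m T A B)ᵀ * bigQ n T Q) * bigG n T A := by
  have hwoodbury := inv_one_add_mul_inv_mul (bigF n m T A B) ((bigF n m T A B)ᵀ * bigQ n T Q)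
    (posDef_bigR hR).isUnit (posDef_bigP (A := A) (B := B) hQ hR).isUnit
  rw [← Matrix.mul_assoc, ← Matrix.mul_assoc] at hwoodbury
  rw [Cmat, hwoodbury, bigP]
  simp only [Matrix.mul_sub, Matrix.mul_one, Matrix.mul_assoc]

theorem isHermitian_Cmat (hQ : Q.PosSemidef) (hR : R.PosDef) :
    (Cmat n m T A B Q R).IsHermitian := by
  have hQbig := (posSemidef_bigQ (T := T) hQ).isHermitian
  have hfeedback := isHermitian_conjTranspose_mul_mul ((bigF n m T A B)ᵀ * bigQ n T Q)
    (posDef_bigP (A := A) (B := B) hQ hR).isHermitian.inv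
  rw [conjTranspose_mul, hQbig.eq, conjTranspose_eq_transpose_of_trivial, transpose_transpose,
    ← Matrix.mul_assoc] at hfeedback
  rw [Cmat_eq_transpose_mul_mul hQ hR]
  exact isHermitian_conjTranspose_mul_mul _ (hQbig.sub hfeedback)

theorem costJ_eq_Cmat_add_square (hQ : Q.PosSemidef) (hR : R.PosDef) (u : UIdx m T → ℝ)
    (δ : SIdx n T → ℝ) :
    costJ n m T A B Q R u δ = δ ⬝ᵥ Cmat n m T A B Q R *ᵥ δ +
      (u - optimalControl (bigF n m T A B) (bigQ n T Q) (bigR m T R) (bigG n T A *ᵥ δ)) ⬝ᵥ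
        bigP n m T A B Q R *ᵥ
          (u - optimalControl (bigF n m T A B) (bigQ n T Q) (bigR m T R) (bigG n T A *ᵥ δ)) := by
  rw [Cmat_eq_transpose_mul_mul hQ hR, dotProduct_transpose_mul_mul_mulVec]
  exact quadraticCost_eq_minimum_add_square _
    (isHermitian_iff_isSymm.1 (posSemidef_bigQ hQ).isHermitian)
    (isHermitian_iff_isSymm.1 (posDef_bigR hR).isHermitian) (posDef_bigP hQ hR).isUnit _ _

theorem dotProduct_Cmat_mulVec_le_stageCost (hQ : Q.PosSemidef) (hR : R.PosDef)
    {x : SIdx n T → ℝ} {u : UIdx m T → ℝ} {δ : SIdx n T → ℝ} (h : IsTrajectory A B x u δ) :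
    δ ⬝ᵥ Cmat n m T A B Q R *ᵥ δ ≤ stageCost Q R x u := by
  rw [← costJ_eq_stageCost h, costJ_eq_Cmat_add_square hQ hR]
  exact le_add_of_nonneg_right ((posDef_bigP hQ hR).posSemidef.dotProduct_mulVec_nonneg _)

theorem exists_isTrajectory_stageCost_eq_Cmat (A : Matrix (Fin n) (Fin n) ℝ)
    (B : Matrix (Fin n) (Fin m) ℝ) (hQ : Q.PosSemidef) (hR : R.PosDef) (δ : SIdx n T → ℝ) :
    ∃ x u, IsTrajectory A B x u δ ∧ stageCost Q R x u = δ ⬝ᵥ Cmat n m T A B Q R *ᵥ δ := by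
  let u := optimalControl (bigF n m T A B) (bigQ n T Q) (bigR m T R) (bigG n T A *ᵥ δ)
  have htraj : IsTrajectory A B (bigF n m T A B *ᵥ u + bigG n T A *ᵥ δ) u δ :=
    isTrajectory_iff_eq_bigF_add_bigG.2 rfl
  refine ⟨_, u, htraj, ?_⟩
  rw [← costJ_eq_stageCost htraj, costJ_eq_Cmat_add_square hQ hR, sub_self, zero_dotProduct,
    add_zero]

theorem dotProduct_Cmat_mulVec_dropLastBlock_le (A : Matrix (Fin n) (Fin n) ℝ)
    (B : Matrix (Fin n) (Fin m) ℝ) (hQ : Q.PosSemidef) (hR : R.PosDef)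
    (δ : SIdx n (T + 1) → ℝ) :
    dropLastBlock δ ⬝ᵥ Cmat n m T A B Q R *ᵥ dropLastBlock δ ≤
      δ ⬝ᵥ Cmat n m (T + 1) A B Q R *ᵥ δ := by
  obtain ⟨x, u, htraj, hcost⟩ := exists_isTrajectory_stageCost_eq_Cmat A B hQ hR δ
  calc
    _ ≤ stageCost Q R (dropLastBlock x) (dropLastBlock u) :=
      dotProduct_Cmat_mulVec_le_stageCost hQ hR htraj.dropLastBlock
    _ ≤ stageCost Q R x u := stageCost_dropLastBlock_le hQ hR.posSemidef x u
    _ = δ ⬝ᵥ Cmat n m (T + 1) A B Q R *ᵥ δ := hcost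

end ClairvoyantCost

section Regret

variable {n m T : ℕ} {A : Matrix (Fin n) (Fin n) ℝ} {B : Matrix (Fin n) (Fin m) ℝ}
  {Q : Matrix (Fin n) (Fin n) ℝ} {R : Matrix (Fin m) (Fin m) ℝ} {P : Matrix (Fin n) (Fin n) ℝ}
  {γ : ℝ} {Φx : Matrix (SIdx n T) (SIdx n T) ℝ} {Φu : Matrix (UIdx m T) (SIdx n T) ℝ}

theorem assemble_zero (x₀ : Fin n → ℝ) (w : Fin T × Fin n → ℝ) (k : Fin n) :
    assemble n T x₀ w (0, k) = x₀ k := by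
  simp [assemble]

theorem assemble_succ (x₀ : Fin n → ℝ) (w : Fin T × Fin n → ℝ) (t : Fin T) (k : Fin n) :
    assemble n T x₀ w (t.succ, k) = w (t, k) := by
  simp [assemble]

theorem assemble_zero_dotProduct (w : Fin T × Fin n → ℝ) (v : SIdx n T → ℝ) :
    assemble n T 0 w ⬝ᵥ v = w ⬝ᵥ fun c => v (c.1.succ, c.2) := by
  simp only [dotProduct, Fintype.sum_prod_type, Fin.sum_univ_succ, assemble_zero, assemble_succ,
    Pi.zero_apply, zero_mul, Finset.sum_const_zero, zero_add]

theorem submatrix_succ_mulVec {ι κ : Type*} (M : Matrix ι (SIdx n T) ℝ) (f : κ → ι)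
    (w : Fin T × Fin n → ℝ) :
    M.submatrix f (fun c : Fin T × Fin n => (c.1.succ, c.2)) *ᵥ w =
      (M *ᵥ assemble n T 0 w) ∘ f := by
  ext r
  rw [Function.comp_apply, mulVec, mulVec, dotProduct_comm _ (assemble n T 0 w),
    assemble_zero_dotProduct, dotProduct_comm]
  rfl

theorem stackW_mulVec (w : Fin T × Fin n → ℝ) :
    stackW n m T Φx Φu *ᵥ w =
      Sum.elim (Φx *ᵥ assemble n T 0 w) (Φu *ᵥ assemble n T 0 w) := by
  ext (p | q)
  · exact congrFun (submatrix_succ_mulVec Φx id w) p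
  · exact congrFun (submatrix_succ_mulVec Φu id w) q

theorem isHermitian_bigS (hQ : Q.IsHermitian) (hP : P.IsHermitian) (hR : R.PosDef) :
    (bigS n m T Q P R).IsHermitian :=
  (isHermitian_bigQbar hQ hP).fromBlocks conjTranspose_zero (posDef_bigR hR).isHermitian

theorem dotProduct_bigS_mulVec (x : SIdx n T → ℝ) (u : UIdx m T → ℝ) :
    Sum.elim x u ⬝ᵥ bigS n m T Q P R *ᵥ Sum.elim x u =
      stageCost Q R x u + timeBlock x (Fin.last T) ⬝ᵥ P *ᵥ timeBlock x (Fin.last T) := by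
  simp only [bigS, fromBlocks_mulVec, Sum.elim_comp_inl, Sum.elim_comp_inr, zero_mulVec, add_zero,
    zero_add, sumElim_dotProduct_sumElim, dotProduct_bigQbar_mulVec, dotProduct_bigR_mulVec,
    stageCost, Finset.sum_add_distrib]
  ring

theorem RegT_eq (x₀ : Fin n → ℝ) (w : Fin T × Fin n → ℝ) :
    RegT n m T A B Q R P γ Φx Φu x₀ w =
      stageCost Q R (Φx *ᵥ assemble n T x₀ w) (Φu *ᵥ assemble n T x₀ w) +
        timeBlock (Φx *ᵥ assemble n T x₀ w) (Fin.last T) ⬝ᵥ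
          P *ᵥ timeBlock (Φx *ᵥ assemble n T x₀ w) (Fin.last T) -
        assemble n T x₀ w ⬝ᵥ Cmat n m T A B Q R *ᵥ assemble n T x₀ w - γ ^ 2 * (w ⬝ᵥ w) := by
  simp only [RegT, dotProduct_bigS_mulVec]

theorem lmiOK_iff_forall_RegT_nonpos (hQ : Q.PosSemidef) (hR : R.PosDef) (hP : P.IsHermitian) :
    lmiOK n m T A B Q R P γ Φx Φu ↔ ∀ w, RegT n m T A B Q R P γ Φx Φu 0 w ≤ 0 := by
  have hherm : (γ ^ 2 • (1 : Matrix (Fin T × Fin n) (Fin T × Fin n) ℝ) +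
      (Cmat n m T A B Q R).submatrix (fun c : Fin T × Fin n => (c.1.succ, c.2))
        (fun c : Fin T × Fin n => (c.1.succ, c.2)) -
      (stackW n m T Φx Φu)ᵀ * bigS n m T Q P R * stackW n m T Φx Φu).IsHermitian :=
    ((isHermitian_one.smul (.all _)).add ((isHermitian_Cmat hQ hR).submatrix _)).sub
      (isHermitian_conjTranspose_mul_mul _ (isHermitian_bigS hQ.isHermitian hP hR))
  have hform (w : Fin T × Fin n → ℝ) :
      w ⬝ᵥ (γ ^ 2 • (1 : Matrix (Fin T × Fin n) (Fin T × Fin n) ℝ) +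
        (Cmat n m T A B Q R).submatrix (fun c : Fin T × Fin n => (c.1.succ, c.2))
          (fun c : Fin T × Fin n => (c.1.succ, c.2)) -
        (stackW n m T Φx Φu)ᵀ * bigS n m T Q P R * stackW n m T Φx Φu) *ᵥ w =
      -RegT n m T A B Q R P γ Φx Φu 0 w := by
    rw [sub_mulVec, add_mulVec, dotProduct_sub, dotProduct_add, smul_mulVec, one_mulVec,
      dotProduct_smul, smul_eq_mul, submatrix_succ_mulVec, dotProduct_transpose_mul_mul_mulVec,
      stackW_mulVec]
    simp only [RegT, assemble_zero_dotProduct, Function.comp_def]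
    ring
  simp only [lmiOK, posSemidef_iff_dotProduct_mulVec, hherm, true_and, star_trivial, hform,
    Left.nonneg_neg_iff]

end Regret

section BlockTriangular

variable {ι κ : Type*} {S T : ℕ}

/-- The block row `t` of a matrix acting on stacked trajectories. -/
def blockRow {τ σ : Type*} (M : Matrix (τ × ι) σ ℝ) (t : τ) : Matrix ι σ ℝ :=
  M.submatrix (Prod.mk t) id

/-- The matrix `M` with the block row `L` appended below. -/
def appendBlockRow {σ : Type*} (M : Matrix (Fin T × ι) σ ℝ) (L : Matrix ι σ ℝ) :
    Matrix (Fin (T + 1) × ι) σ ℝ :=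
  of fun p q => Fin.snoc (α := fun _ => ℝ) (fun t => M (t, p.2) q) (L p.2 q) p.1

theorem blockRow_mulVec {τ σ : Type*} [Fintype σ] (M : Matrix (τ × ι) σ ℝ) (t : τ) (v : σ → ℝ) :
    blockRow M t *ᵥ v = timeBlock (M *ᵥ v) t :=
  rfl

theorem timeBlock_appendBlockRow_mulVec_castSucc {σ : Type*} [Fintype σ]
    (M : Matrix (Fin T × ι) σ ℝ) (L : Matrix ι σ ℝ) (v : σ → ℝ) (t : Fin T) :
    timeBlock (appendBlockRow M L *ᵥ v) t.castSucc = timeBlock (M *ᵥ v) t := by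
  ext k
  simp [timeBlock, appendBlockRow, mulVec]

theorem timeBlock_appendBlockRow_mulVec_last {σ : Type*} [Fintype σ]
    (M : Matrix (Fin T × ι) σ ℝ) (L : Matrix ι σ ℝ) (v : σ → ℝ) :
    timeBlock (appendBlockRow M L *ᵥ v) (Fin.last T) = L *ᵥ v := by
  ext k
  simp [timeBlock, appendBlockRow, mulVec]

/-- The matrix of `dropLastBlock`. -/
def dropLastMatrix (ι : Type*) [DecidableEq ι] (T : ℕ) : Matrix (Fin T × ι) (Fin (T + 1) × ι) ℝ :=
  (1 : Matrix (Fin (T + 1) × ι) (Fin (T + 1) × ι) ℝ).submatrix (fun p => (p.1.castSucc, p.2)) id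

theorem dropLastMatrix_mulVec [DecidableEq ι] [Fintype ι] (v : Fin (T + 1) × ι → ℝ) :
    dropLastMatrix ι T *ᵥ v = dropLastBlock v := by
  ext p
  exact congrFun (one_mulVec v) (p.1.castSucc, p.2)

theorem forall_eq_zero_of_lt_iff_timeBlock_mulVec_eq_zero [Fintype κ]
    {Φ : Matrix (Fin S × ι) (Fin T × κ) ℝ} :
    (∀ p q, (p.1 : ℕ) < q.1 → Φ p q = 0) ↔
      ∀ (t : Fin S) (δ : Fin T × κ → ℝ),
        (∀ s : Fin T, (s : ℕ) ≤ t → timeBlock δ s = 0) → timeBlock (Φ *ᵥ δ) t = 0 := by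
  constructor
  · intro hΦ t δ hδ
    ext k
    refine Finset.sum_eq_zero fun q _ => ?_
    rcases lt_or_ge (t : ℕ) q.1 with hlt | hge
    · exact mul_eq_zero_of_left (hΦ (t, k) q hlt) _
    · exact mul_eq_zero_of_right _ (congrFun (hδ q.1 hge) q.2)
  · classical
    intro hΦ p q hpq
    have hsingle (s : Fin T) (hs : (s : ℕ) ≤ p.1) :
        timeBlock (Pi.single q 1 : Fin T × κ → ℝ) s = 0 := by
      ext k
      exact Pi.single_eq_of_ne (by grind) _
    simpa [timeBlock] using congrFun (hΦ p.1 (Pi.single q 1) hsingle) p.2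

end BlockTriangular

section TerminalExtension

variable {n m T : ℕ} {A : Matrix (Fin n) (Fin n) ℝ} {B : Matrix (Fin n) (Fin m) ℝ}
  {Q : Matrix (Fin n) (Fin n) ℝ} {R : Matrix (Fin m) (Fin m) ℝ} {P : Matrix (Fin n) (Fin n) ℝ}
  {K : Matrix (Fin m) (Fin n) ℝ} {γ γf : ℝ} {W : Set (Fin n → ℝ)}
  {Zc : Set ((Fin n → ℝ) × (Fin m → ℝ))} {Zf : Set (Fin n → ℝ)}
  {Φx : Matrix (SIdx n T) (SIdx n T) ℝ} {Φu : Matrix (UIdx m T) (SIdx n T) ℝ}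

/-- The state response over horizon `T + 1` that follows `Φx` up to time `T` and then takes one
step of the closed loop `x_{T+1} = (A + BK)x_T + w_T`. -/
def extendState (A : Matrix (Fin n) (Fin n) ℝ) (B : Matrix (Fin n) (Fin m) ℝ)
    (K : Matrix (Fin m) (Fin n) ℝ) (Φx : Matrix (SIdx n T) (SIdx n T) ℝ) :
    Matrix (SIdx n (T + 1)) (SIdx n (T + 1)) ℝ :=
  let Ψx := Φx * dropLastMatrix (Fin n) (T + 1)
  let noise := blockRow (1 : Matrix (SIdx n (T + 1)) (SIdx n (T + 1)) ℝ) (Fin.last (T + 1))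
  appendBlockRow Ψx ((A + B * K) * blockRow Ψx (Fin.last T) + noise)

/-- The input response over horizon `T + 1` that follows `Φu` before time `T` and then applies
the terminal feedback `u_T = K x_T`. -/
def extendInput (K : Matrix (Fin m) (Fin n) ℝ) (Φx : Matrix (SIdx n T) (SIdx n T) ℝ)
    (Φu : Matrix (UIdx m T) (SIdx n T) ℝ) : Matrix (UIdx m (T + 1)) (SIdx n (T + 1)) ℝ :=
  let Ψx := Φx * dropLastMatrix (Fin n) (T + 1)
  appendBlockRow (Φu * dropLastMatrix (Fin n) (T + 1)) (K * blockRow Ψx (Fin.last T))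

theorem timeBlock_extendState_mulVec_castSucc (δ : SIdx n (T + 1) → ℝ) (t : Fin (T + 1)) :
    timeBlock (extendState A B K Φx *ᵥ δ) t.castSucc = timeBlock (Φx *ᵥ dropLastBlock δ) t := by
  rw [extendState, timeBlock_appendBlockRow_mulVec_castSucc, ← mulVec_mulVec,
    dropLastMatrix_mulVec]

theorem timeBlock_extendState_mulVec_last (δ : SIdx n (T + 1) → ℝ) :
    timeBlock (extendState A B K Φx *ᵥ δ) (Fin.last (T + 1)) =
      (A + B * K) *ᵥ timeBlock (Φx *ᵥ dropLastBlock δ) (Fin.last T) +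
        timeBlock δ (Fin.last (T + 1)) := by
  rw [extendState, timeBlock_appendBlockRow_mulVec_last, add_mulVec, ← mulVec_mulVec,
    blockRow_mulVec, blockRow_mulVec, one_mulVec, ← mulVec_mulVec, dropLastMatrix_mulVec]

theorem timeBlock_extendInput_mulVec_castSucc (δ : SIdx n (T + 1) → ℝ) (t : Fin T) :
    timeBlock (extendInput K Φx Φu *ᵥ δ) t.castSucc = timeBlock (Φu *ᵥ dropLastBlock δ) t := by
  rw [extendInput, timeBlock_appendBlockRow_mulVec_castSucc, ← mulVec_mulVec,
    dropLastMatrix_mulVec]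

theorem timeBlock_extendInput_mulVec_last (δ : SIdx n (T + 1) → ℝ) :
    timeBlock (extendInput K Φx Φu *ᵥ δ) (Fin.last T) =
      K *ᵥ timeBlock (Φx *ᵥ dropLastBlock δ) (Fin.last T) := by
  rw [extendInput, timeBlock_appendBlockRow_mulVec_last, ← mulVec_mulVec, blockRow_mulVec,
    ← mulVec_mulVec, dropLastMatrix_mulVec]

theorem dropLastBlock_extendState_mulVec (δ : SIdx n (T + 1) → ℝ) :
    dropLastBlock (extendState A B K Φx *ᵥ δ) = Φx *ᵥ dropLastBlock δ :=
  timeBlock_ext fun t => timeBlock_extendState_mulVec_castSucc δ t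

theorem dropLastBlock_extendInput_mulVec (δ : SIdx n (T + 1) → ℝ) :
    dropLastBlock (extendInput K Φx Φu *ᵥ δ) = Φu *ᵥ dropLastBlock δ :=
  timeBlock_ext fun t => timeBlock_extendInput_mulVec_castSucc δ t

theorem dropLastBlock_assemble (x₀ : Fin n → ℝ) (w : Fin (T + 1) × Fin n → ℝ) :
    dropLastBlock (assemble n (T + 1) x₀ w) = assemble n T x₀ (dropLastBlock w) := by
  ext p
  simp [dropLastBlock, assemble]

theorem timeBlock_assemble_succ (x₀ : Fin n → ℝ) (w : Fin T × Fin n → ℝ) (t : Fin T) :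
    timeBlock (assemble n T x₀ w) t.succ = timeBlock w t :=
  funext (assemble_succ x₀ w t)

theorem causalPair_extend (h : causalPair n m T Φx Φu) :
    causalPair n m (T + 1) (extendState A B K Φx) (extendInput K Φx Φu) := by
  obtain ⟨hx, hu⟩ := h
  rw [causalPair, forall_eq_zero_of_lt_iff_timeBlock_mulVec_eq_zero,
    forall_eq_zero_of_lt_iff_timeBlock_mulVec_eq_zero]
  rw [forall_eq_zero_of_lt_iff_timeBlock_mulVec_eq_zero] at hx hu
  have hlast (δ : SIdx n (T + 1) → ℝ) (hδ : ∀ s : Fin (T + 2), (s : ℕ) ≤ T → timeBlock δ s = 0) :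
      timeBlock (Φx *ᵥ dropLastBlock δ) (Fin.last T) = 0 :=
    hx _ _ fun s hs => hδ s.castSucc hs
  constructor <;> refine Fin.lastCases (fun δ hδ => ?_) fun t δ hδ => ?_
  · rw [timeBlock_extendState_mulVec_last, hlast δ fun s hs => hδ s (hs.trans (by simp)),
      hδ _ le_rfl, mulVec_zero, add_zero]
  · rw [timeBlock_extendState_mulVec_castSucc]
    exact hx _ _ fun s hs => hδ s.castSucc hs
  · rw [timeBlock_extendInput_mulVec_last, hlast δ hδ, mulVec_zero]
  · rw [timeBlock_extendInput_mulVec_castSucc]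
    exact hu _ _ fun s hs => hδ s.castSucc hs

theorem achievablePair_extend (h : achievablePair n m T A B Φx Φu) :
    achievablePair n m (T + 1) A B (extendState A B K Φx) (extendInput K Φx Φu) := by
  rw [achievablePair_iff_forall_isTrajectory] at h ⊢
  intro δ
  obtain ⟨hinit, hstep⟩ := h (dropLastBlock δ)
  refine ⟨?_, Fin.lastCases ?_ fun t => ?_⟩
  · rw [← Fin.castSucc_zero, timeBlock_extendState_mulVec_castSucc, hinit,
      timeBlock_dropLastBlock]
  · rw [Fin.succ_last, timeBlock_extendState_mulVec_last, timeBlock_extendState_mulVec_castSucc,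
      timeBlock_extendInput_mulVec_last, add_mulVec, mulVec_mulVec]
  · rw [Fin.succ_castSucc, timeBlock_extendState_mulVec_castSucc, hstep,
      timeBlock_extendState_mulVec_castSucc, timeBlock_extendInput_mulVec_castSucc,
      timeBlock_dropLastBlock]

theorem safePair_extend (hZfK : ∀ x ∈ Zf, (x, K *ᵥ x) ∈ Zc)
    (hZfInv : ∀ x ∈ Zf, ∀ w ∈ W, (A + B * K) *ᵥ x + w ∈ Zf) {x₀ : Fin n → ℝ}
    (h : safePair n m T W Zc Zf x₀ Φx Φu) :
    safePair n m (T + 1) W Zc Zf x₀ (extendState A B K Φx) (extendInput K Φx Φu) := by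
  intro w hw
  obtain ⟨hstage, hterminal⟩ := h (dropLastBlock w) fun t => hw t.castSucc
  rw [← dropLastBlock_assemble] at hstage hterminal
  set δ := assemble n (T + 1) x₀ w
  have hδ : timeBlock δ (Fin.last (T + 1)) = timeBlock w (Fin.last T) :=
    timeBlock_assemble_succ x₀ w (Fin.last T)
  change (∀ t : Fin (T + 1), (timeBlock (extendState A B K Φx *ᵥ δ) t.castSucc,
    timeBlock (extendInput K Φx Φu *ᵥ δ) t) ∈ Zc) ∧
      timeBlock (extendState A B K Φx *ᵥ δ) (Fin.last (T + 1)) ∈ Zf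
  constructor
  · refine Fin.lastCases ?_ fun t => ?_
    · rw [timeBlock_extendState_mulVec_castSucc, timeBlock_extendInput_mulVec_last]
      exact hZfK _ hterminal
    · rw [timeBlock_extendState_mulVec_castSucc, timeBlock_extendInput_mulVec_castSucc]
      exact hstage t
  · rw [timeBlock_extendState_mulVec_last, hδ]
    exact hZfInv _ hterminal _ (hw (Fin.last T))

theorem RegT_antitone_gain {γ' : ℝ} (hγ : 0 ≤ γ) (hγγ' : γ ≤ γ') (x₀ : Fin n → ℝ)
    (w : Fin T × Fin n → ℝ) :
    RegT n m T A B Q R P γ' Φx Φu x₀ w ≤ RegT n m T A B Q R P γ Φx Φu x₀ w :=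
  sub_le_sub_left (mul_le_mul_of_nonneg_right (pow_le_pow_left₀ hγ hγγ' 2)
    (dotProduct_self_star_nonneg w)) _

theorem RegT_extend_le (hQ : Q.PosSemidef) (hR : R.PosDef)
    (hdiss : TerminalDissipation A B Q R P K γf) (hγf : 0 ≤ γf) (hγ : γf ≤ γ) (x₀ : Fin n → ℝ)
    (w : Fin (T + 1) × Fin n → ℝ) :
    RegT n m (T + 1) A B Q R P γ (extendState A B K Φx) (extendInput K Φx Φu) x₀ w ≤
      RegT n m T A B Q R P γ Φx Φu x₀ (dropLastBlock w) := by
  have hstep := hdiss (timeBlock (Φx *ᵥ assemble n T x₀ (dropLastBlock w)) (Fin.last T))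
    (timeBlock w (Fin.last T))
  have hclairvoyant :=
    dotProduct_Cmat_mulVec_dropLastBlock_le A B hQ hR (assemble n (T + 1) x₀ w)
  have hsupply : γf ^ 2 * (timeBlock w (Fin.last T) ⬝ᵥ timeBlock w (Fin.last T)) ≤
      γ ^ 2 * (timeBlock w (Fin.last T) ⬝ᵥ timeBlock w (Fin.last T)) :=
    mul_le_mul_of_nonneg_right (pow_le_pow_left₀ hγf hγ 2) (dotProduct_self_star_nonneg _)
  have hnorm : w ⬝ᵥ w = dropLastBlock w ⬝ᵥ dropLastBlock w +
      timeBlock w (Fin.last T) ⬝ᵥ timeBlock w (Fin.last T) := by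
    simp only [dotProduct_eq_sum_timeBlock, timeBlock_dropLastBlock, Fin.sum_univ_castSucc]
  have hlast : timeBlock (assemble n (T + 1) x₀ w) (Fin.last (T + 1)) = timeBlock w (Fin.last T) :=
    timeBlock_assemble_succ x₀ w (Fin.last T)
  rw [RegT_eq, RegT_eq, stageCost_succ, dropLastBlock_extendState_mulVec,
    dropLastBlock_extendInput_mulVec, timeBlock_extendState_mulVec_castSucc,
    timeBlock_extendInput_mulVec_last, timeBlock_extendState_mulVec_last, hlast,
    ← dropLastBlock_assemble, hnorm]
  rw [← dropLastBlock_assemble] at hstep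
  linarith

theorem memPi_extend (hQ : Q.PosSemidef) (hR : R.PosDef) (hP : P.IsHermitian) (hγf : 0 ≤ γf)
    (hdiss : TerminalDissipation A B Q R P K γf) (hZfK : ∀ x ∈ Zf, (x, K *ᵥ x) ∈ Zc)
    (hZfInv : ∀ x ∈ Zf, ∀ w ∈ W, (A + B * K) *ᵥ x + w ∈ Zf) (hγ : 0 ≤ γ) {x₀ : Fin n → ℝ}
    (h : memPi n m T A B Q R P W Zc Zf γ x₀ Φx Φu) :
    memPi n m (T + 1) A B Q R P W Zc Zf (max γf γ) x₀ (extendState A B K Φx)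
      (extendInput K Φx Φu) := by
  obtain ⟨hcausal, hachievable, hsafe, hlmi⟩ := h
  refine ⟨causalPair_extend hcausal, achievablePair_extend hachievable,
    safePair_extend hZfK hZfInv hsafe, ?_⟩
  rw [lmiOK_iff_forall_RegT_nonpos hQ hR hP] at hlmi ⊢
  intro w
  calc
    _ ≤ RegT n m T A B Q R P (max γf γ) Φx Φu 0 (dropLastBlock w) :=
      RegT_extend_le hQ hR hdiss hγf (le_max_left _ _) 0 w
    _ ≤ RegT n m T A B Q R P γ Φx Φu 0 (dropLastBlock w) :=
      RegT_antitone_gain hγ (le_max_right _ _) 0 _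
    _ ≤ 0 := hlmi _

end TerminalExtension

theorem stmt17_general {n m T : ℕ} {A : Matrix (Fin n) (Fin n) ℝ} {B : Matrix (Fin n) (Fin m) ℝ}
    {Q : Matrix (Fin n) (Fin n) ℝ} {R : Matrix (Fin m) (Fin m) ℝ} {P : Matrix (Fin n) (Fin n) ℝ}
    {K : Matrix (Fin m) (Fin n) ℝ} {γf : ℝ} {W : Set (Fin n → ℝ)}
    {Zc : Set ((Fin n → ℝ) × (Fin m → ℝ))} {Zf : Set (Fin n → ℝ)} {x : Fin n → ℝ}
    (hQ : Q.PosSemidef) (hR : R.PosDef) (hP : P.IsHermitian) (hγf : 0 ≤ γf)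
    (hdiss : TerminalDissipation A B Q R P K γf) (hZfK : ∀ x ∈ Zf, (x, K *ᵥ x) ∈ Zc)
    (hZfInv : ∀ x ∈ Zf, ∀ w ∈ W, (A + B * K) *ᵥ x + w ∈ Zf)
    (hx : ∃ γ : ℝ, 0 ≤ γ ∧ ∃ Φx Φu, memPi n m T A B Q R P W Zc Zf γ x Φx Φu) :
    gammaStar n m (T + 1) A B Q R P W Zc Zf x ≤
      max γf (gammaStar n m T A B Q R P W Zc Zf x) := by
  refine le_of_forall_gt fun c hc => ?_
  obtain ⟨hγfc, hstarc⟩ := max_lt_iff.1 hc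
  obtain ⟨γ, ⟨hγ, Φx, Φu, hmem⟩, hγc⟩ := exists_lt_of_csInf_lt hx hstarc
  have hextend := memPi_extend hQ hR hP hγf hdiss hZfK hZfInv hγ hmem
  calc
    gammaStar n m (T + 1) A B Q R P W Zc Zf x ≤ max γf γ :=
      csInf_le ⟨0, fun _ h => h.1⟩ ⟨hγ.trans (le_max_right _ _), _, _, hextend⟩
    _ < c := max_lt hγfc hγc

/-- Monotonicity of the minimum gain function: for every `x` that is feasible at some
performance level, `γ*_{T+1}(x) ≤ max {γ_f, γ*_T(x)}`. -/
theorem stmt17 (n m : ℕ) (hn : 0 < n) (hm : 0 < m)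
    (A : Matrix (Fin n) (Fin n) ℝ) (B : Matrix (Fin n) (Fin m) ℝ)
    (Q : Matrix (Fin n) (Fin n) ℝ) (R : Matrix (Fin m) (Fin m) ℝ)
    (hQ : Q.PosSemidef) (hR : R.PosDef)
    (γf : ℝ) (hγf : 0 < γf)
    (P : Matrix (Fin n) (Fin n) ℝ) (hP : P.PosDef)
    (hγP : (γf ^ 2 • (1 : Matrix (Fin n) (Fin n) ℝ) - P).PosDef)
    (Pbar : Matrix (Fin n) (Fin n) ℝ)
    (hPbar : Pbar = P + P * (γf ^ 2 • (1 : Matrix (Fin n) (Fin n) ℝ) - P)⁻¹ * P)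
    (hRic : P = Q + Aᵀ * Pbar * A -
      Aᵀ * Pbar * B * (R + Bᵀ * Pbar * B)⁻¹ * Bᵀ * Pbar * A)
    (Kf : Matrix (Fin m) (Fin n) ℝ)
    (hKf : Kf = -((R + Bᵀ * Pbar * B)⁻¹ * Bᵀ * Pbar * A))
    (W : Set (Fin n → ℝ)) (hWconv : Convex ℝ W) (hWcomp : IsCompact W)
    (hW0 : (0 : Fin n → ℝ) ∈ interior W)
    (Zc : Set ((Fin n → ℝ) × (Fin m → ℝ))) (hZcl : IsClosed Zc) (hZconv : Convex ℝ Zc)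
    (hZ0 : ((0 : Fin n → ℝ), (0 : Fin m → ℝ)) ∈ interior Zc)
    (Zf : Set (Fin n → ℝ)) (hZfcl : IsClosed Zf) (hZfconv : Convex ℝ Zf)
    (hZf0 : (0 : Fin n → ℝ) ∈ interior Zf)
    (hZfK : ∀ x ∈ Zf, (x, Kf *ᵥ x) ∈ Zc)
    (hZfInv : ∀ x ∈ Zf, ∀ w ∈ W, (A + B * Kf) *ᵥ x + w ∈ Zf)
    (T : ℕ) (hT : 1 ≤ T) (x : Fin n → ℝ)
    (hx : ∃ γ : ℝ, 0 ≤ γ ∧ ∃ Φx Φu, memPi n m T A B Q R P W Zc Zf γ x Φx Φu) :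
    gammaStar n m (T + 1) A B Q R P W Zc Zf x ≤
      max γf (gammaStar n m T A B Q R P W Zc Zf x) := by
  subst hPbar hKf
  exact stmt17_general hQ hR hP.isHermitian hγf.le
    (terminalDissipation_of_riccati hR hP.posSemidef hγP hRic) hZfK hZfInv hx

end
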